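/- With u = (1/3)a² − b and v = (2/9)a³ − ab − 3c, there exists a nonzero rational number C such that, in U(𝔤), modulo the left ideal U(𝔤)𝔫₊: (E₂₁⁵F₂₁^{10})_L(u·v) ≡ C·q(H), where q(H) = (2/27)H₂₁(H₂₁−1)(H₂₁−2)(H₂₁−3)(H₂₁−4) + (5/9)H₂₁(H₂₁−2)(H₂₁−3)(H₂₁−4) + (H₂₁−3)(H₂₁−4)H₀₁(H₀₁+2) + 2H₂₁(H₂₁−4)(H₁₁−1) + 2(H₂₁−4)H₁₀(H₁₀−1) − 6(H₂₁−4)H₀₁(H₀₁+1) + 6(H₂₁−3)H₀₁(H₀₁+2). -/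

import Mathlib

/-- The canonical embedding of a Lie algebra into its universal enveloping algebra. -/
noncomputable def ιU {L : Type*} [LieRing L] [LieAlgebra ℂ L] (x : L) :
    UniversalEnvelopingAlgebra ℂ L :=
  UniversalEnvelopingAlgebra.ι ℂ x

/-- The adjoint action `X_L : f ↦ Xf − fX` of `X ∈ L` on `U(L)`. -/
noncomputable def adU {L : Type*} [LieRing L] [LieAlgebra ℂ L] (x : L)
    (f : UniversalEnvelopingAlgebra ℂ L) : UniversalEnvelopingAlgebra ℂ L :=
  ιU x * f - f * ιU x

/-- A Lie algebra over `ℂ` equipped with Chevalley generators of type `G₂`: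
`E₁₀, F₁₀, H₁₀` correspond to the short simple root `α` and `E₀₁, F₀₁, H₀₁` to the long
simple root `β`, subject to the Chevalley relations and the Serre relations, and the
generators generate the Lie algebra.  (By Serre's theorem such a Lie algebra is a quotient of
the simple Lie algebra of type `G₂`.) -/
structure G2Gens (L : Type*) [LieRing L] [LieAlgebra ℂ L] where
  E10 : L
  E01 : L
  F10 : L
  F01 : L
  H10 : L
  H01 : L
  hH10H01 : ⁅H10, H01⁆ = 0
  hE10F10 : ⁅E10, F10⁆ = H10
  hE01F01 : ⁅E01, F01⁆ = H01
  hE10F01 : ⁅E10, F01⁆ = 0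
  hE01F10 : ⁅E01, F10⁆ = 0
  hH10E10 : ⁅H10, E10⁆ = (2 : ℂ) • E10
  hH01E01 : ⁅H01, E01⁆ = (2 : ℂ) • E01
  hH10E01 : ⁅H10, E01⁆ = (-3 : ℂ) • E01
  hH01E10 : ⁅H01, E10⁆ = (-1 : ℂ) • E10
  hH10F10 : ⁅H10, F10⁆ = (-2 : ℂ) • F10
  hH01F01 : ⁅H01, F01⁆ = (-2 : ℂ) • F01
  hH10F01 : ⁅H10, F01⁆ = (3 : ℂ) • F01
  hH01F10 : ⁅H01, F10⁆ = (1 : ℂ) • F10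
  serreE1 : ⁅E10, ⁅E10, ⁅E10, ⁅E10, E01⁆⁆⁆⁆ = 0
  serreE2 : ⁅E01, ⁅E01, E10⁆⁆ = 0
  serreF1 : ⁅F10, ⁅F10, ⁅F10, ⁅F10, F01⁆⁆⁆⁆ = 0
  serreF2 : ⁅F01, ⁅F01, F10⁆⁆ = 0
  generates : LieSubalgebra.lieSpan ℂ L {E10, E01, F10, F01, H10, H01} = ⊤

namespace G2Gens

variable {L : Type*} [LieRing L] [LieAlgebra ℂ L] (g : G2Gens L)

/-- The root vector `E₁₁ = [E₁₀, E₀₁]`. -/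
def E11 : L := ⁅g.E10, g.E01⁆
/-- The root vector `E₂₁ = (1/2)[E₁₁, E₁₀]`. -/
noncomputable def E21 : L := (2 : ℂ)⁻¹ • ⁅g.E11, g.E10⁆
/-- The root vector `E₃₁ = (1/3)[E₂₁, E₁₀]`. -/
noncomputable def E31 : L := (3 : ℂ)⁻¹ • ⁅g.E21, g.E10⁆
/-- The root vector `E₃₂ = [E₃₁, E₀₁]`. -/
noncomputable def E32 : L := ⁅g.E31, g.E01⁆
/-- The root vector `F₁₁ = [F₀₁, F₁₀]`. -/
def F11 : L := ⁅g.F01, g.F10⁆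
/-- The root vector `F₂₁ = (1/2)[F₁₀, F₁₁]`. -/
noncomputable def F21 : L := (2 : ℂ)⁻¹ • ⁅g.F10, g.F11⁆
/-- The root vector `F₃₁ = (1/3)[F₁₀, F₂₁]`. -/
noncomputable def F31 : L := (3 : ℂ)⁻¹ • ⁅g.F10, g.F21⁆
/-- The root vector `F₃₂ = [F₀₁, F₃₁]`. -/
noncomputable def F32 : L := ⁅g.F01, g.F31⁆
/-- The coroot `H₁₁ = H₁₀ + 3H₀₁`. -/
def H11 : L := g.H10 + (3 : ℂ) • g.H01
/-- The coroot `H₂₁ = 2H₁₀ + 3H₀₁`. -/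
def H21 : L := (2 : ℂ) • g.H10 + (3 : ℂ) • g.H01
/-- The coroot `H₃₁ = H₁₀ + H₀₁`. -/
def H31 : L := g.H10 + g.H01
/-- The coroot `H₃₂ = H₁₀ + 2H₀₁`. -/
def H32 : L := g.H10 + (2 : ℂ) • g.H01

/-- The element `a = E₂₁` of `U(𝔤)`. -/
noncomputable def aU : UniversalEnvelopingAlgebra ℂ L := ιU g.E21
/-- The element `b = E₃₁E₁₁ − E₃₂E₁₀` of `U(𝔤)`. -/
noncomputable def bU : UniversalEnvelopingAlgebra ℂ L :=
  ιU g.E31 * ιU g.E11 - ιU g.E32 * ιU g.E10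
/-- The element `c = E₃₁²E₀₁ − E₃₂E₃₁H₀₁ − E₃₂²F₀₁` of `U(𝔤)`. -/
noncomputable def cU : UniversalEnvelopingAlgebra ℂ L :=
  ιU g.E31 * ιU g.E31 * ιU g.E01 - ιU g.E32 * ιU g.E31 * ιU g.H01
    - ιU g.E32 * ιU g.E32 * ιU g.F01
/-- The element `u = (1/3)a² − b` of `U(𝔤)`. -/
noncomputable def uU : UniversalEnvelopingAlgebra ℂ L :=
  (3 : ℂ)⁻¹ • (g.aU * g.aU) - g.bU
/-- The element `v = (2/9)a³ − ab − 3c` of `U(𝔤)`. -/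
noncomputable def vU : UniversalEnvelopingAlgebra ℂ L :=
  ((2 : ℂ) / 9) • (g.aU * g.aU * g.aU) - g.aU * g.bU - (3 : ℂ) • g.cU

/-- `f ≡ h (mod U(𝔤)𝔫₊)`:  `f − h` lies in the left ideal of `U(𝔤)` generated by `E₁₀`
and `E₀₁`. -/
def EqModN (f h : UniversalEnvelopingAlgebra ℂ L) : Prop :=
  ∃ A B : UniversalEnvelopingAlgebra ℂ L, f - h = A * ιU g.E10 + B * ιU g.E01

end G2Gens

/-!
The elements `E₂₁, H₂₁, F₂₁` form an `sl₂`-triple, and `u`, `v` are, up to scalars, the top terms of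
strings of lengths `5` and `7` for its adjoint action. A string `x₀, …, xₙ` is encoded by its
generating polynomial `∑ xₖ tᵏ = exp(t ad E₂₁) x₀`. In this form the strings are closed under
products and Wronskians, which yields those through `u` and `v` from the ones through `E₂₁`, `E₃₁`
and `E₃₂`. Consequently `(ad E₂₁)⁵ (ad F₂₁)¹⁰` sends `u v` to `5! 10!` times the middle coefficient
of the product of the two strings.

This coefficient has weight zero, so modulo `U(𝔤)𝔫₊` it is determined by its action on the highest
weight vector `w` of the universal Verma module `U(𝔤) / U(𝔤)𝔫₊`, whose weight takes values in the
commutative ring generated by the right multiplications by `H₁₀` and `H₀₁`. As `E₂₁ w = 0`, one has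
`E₂₁ vₖ w = (k + 1) vₖ₊₁ w` for the terms `vₖ` of the second string, so that only `v₁ w` has to be
computed.
-/

section Sl2String

open Polynomial
open scoped Nat

attribute [local instance] LieRing.ofAssociativeRing

variable {A : Type*} [Ring A]

/-- `p` is the generating polynomial `∑ xₖ tᵏ = exp(t ad e) x₀` of a string of length `n + 1` for
the adjoint action of `e` and `f`: comparing coefficients,
`⁅e, xₖ⁆ = (k + 1) xₖ₊₁`, `⁅f, xₖ₊₁⁆ = (n - k) xₖ` and `⁅f, x₀⁆ = 0`. -/
structure IsSl2String (e f : A) (n : ℕ) (p : A[X]) : Prop where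
  lie_e : ⁅C e, p⁆ = derivative p
  lie_f : ⁅C f, p⁆ = n • (X * p) - X ^ 2 * derivative p

theorem lie_mul_eq_add (x y z : A) : ⁅x, y * z⁆ = ⁅x, y⁆ * z + y * ⁅x, z⁆ := by
  simp only [Ring.lie_def]
  noncomm_ring

theorem lie_C_monomial (a b : A) (k : ℕ) :
    ⁅C a, monomial k b⁆ = monomial k ⁅a, b⁆ := by
  rw [Ring.lie_def, Ring.lie_def, C_mul_monomial, monomial_mul_C, ← map_sub]

theorem lie_C_C (a b : A) : ⁅C a, C b⁆ = C ⁅a, b⁆ :=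
  lie_C_monomial a b 0

theorem lie_C_derivative (a : A) (p : A[X]) : ⁅C a, derivative p⁆ = derivative ⁅C a, p⁆ := by
  simp [Ring.lie_def, derivative_mul]

namespace IsSl2String

variable {e f : A} {m n : ℕ} {p q : A[X]}

theorem lie_e_coeff (hp : IsSl2String e f n p) (k : ℕ) :
    ⁅e, p.coeff k⁆ = (k + 1) • p.coeff (k + 1) := by
  have h := congrArg (coeff · k) hp.lie_e
  rw [Ring.lie_def]
  simpa [Ring.lie_def, coeff_derivative, (Nat.cast_commute _ _).eq, add_mul, mul_add] using h

theorem lie_f_coeff_zero (hp : IsSl2String e f n p) : ⁅f, p.coeff 0⁆ = 0 := by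
  simpa [Ring.lie_def, pow_two, mul_assoc] using congrArg (coeff · 0) hp.lie_f

theorem lie_f_coeff_succ (hp : IsSl2String e f n p) (k : ℕ) :
    ⁅f, p.coeff (k + 1)⁆ = (n - k : ℤ) • p.coeff k := by
  have h := congrArg (coeff · (k + 1)) hp.lie_f
  rw [Ring.lie_def]
  cases k <;>
    simpa [Ring.lie_def, coeff_derivative, pow_two, mul_assoc,
      (Nat.cast_commute _ _).eq, sub_mul, add_mul, mul_add] using h

theorem sub (hp : IsSl2String e f n p) (hq : IsSl2String e f n q) : IsSl2String e f n (p - q) where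
  lie_e := by rw [lie_sub, hp.lie_e, hq.lie_e, derivative_sub]
  lie_f := by rw [lie_sub, hp.lie_f, hq.lie_f, derivative_sub, mul_sub, mul_sub]; module

theorem smul {R : Type*} [CommSemiring R] [Algebra R A] (c : R) (hp : IsSl2String e f n p) :
    IsSl2String e f n (c • p) where
  lie_e := by
    rw [derivative_smul, ← hp.lie_e, Ring.lie_def, Ring.lie_def, mul_smul_comm, smul_mul_assoc,
      smul_sub]
  lie_f := by
    rw [derivative_smul, mul_smul_comm, mul_smul_comm, smul_comm n c, ← smul_sub, ← hp.lie_f,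
      Ring.lie_def, Ring.lie_def, mul_smul_comm, smul_mul_assoc, smul_sub]

theorem mul (hp : IsSl2String e f m p) (hq : IsSl2String e f n q) :
    IsSl2String e f (m + n) (p * q) where
  lie_e := by rw [lie_mul_eq_add, hp.lie_e, hq.lie_e, derivative_mul]
  lie_f := by
    have hX : p * (X * q) = X * (p * q) := by rw [← mul_assoc, ← X_mul, mul_assoc]
    have hX2 : p * (X ^ 2 * derivative q) = X ^ 2 * (p * derivative q) := by
      rw [← mul_assoc, ← X_pow_mul, mul_assoc]
    rw [lie_mul_eq_add, hp.lie_f, hq.lie_f, derivative_mul, sub_mul, mul_sub, smul_mul_assoc,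
      mul_smul_comm, hX, hX2, mul_assoc, mul_assoc, mul_add]
    module

theorem wronskian (hp : IsSl2String e f (n + 1) p) (hq : IsSl2String e f (n + 1) q) :
    IsSl2String e f (2 * n) (derivative p * q - p * derivative q) where
  lie_e := by
    rw [lie_sub, lie_mul_eq_add, lie_mul_eq_add, lie_C_derivative, lie_C_derivative, hp.lie_e,
      hq.lie_e, derivative_sub, derivative_mul, derivative_mul]
  lie_f := by
    have hX (r s : A[X]) : r * (X * s) = X * (r * s) := by rw [← mul_assoc, ← X_mul, mul_assoc]
    rw [lie_sub, lie_mul_eq_add, lie_mul_eq_add, lie_C_derivative, lie_C_derivative, hp.lie_f,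
      hq.lie_f]
    simp only [derivative_sub, derivative_smul, derivative_mul, derivative_X, pow_two, add_mul,
      mul_add, sub_mul, mul_sub, smul_mul_assoc, mul_smul_comm, smul_add, one_mul, mul_assoc, hX]
    module

theorem const {a : A} (he : ⁅e, a⁆ = 0) (hf : ⁅f, a⁆ = 0) : IsSl2String e f 0 (C a) where
  lie_e := by rw [lie_C_C, he, C_0, derivative_C]
  lie_f := by rw [lie_C_C, hf, C_0, derivative_C, mul_zero, zero_smul, sub_zero]

theorem lie_lie_coeff (hp : IsSl2String e f n p) (k : ℕ) :
    ⁅⁅e, f⁆, p.coeff k⁆ = (2 * k - n : ℤ) • p.coeff k := by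
  rw [lie_lie, hp.lie_e_coeff, lie_nsmul, hp.lie_f_coeff_succ]
  cases k with
  | zero =>
    rw [hp.lie_f_coeff_zero, lie_zero]
    module
  | succ k =>
    rw [hp.lie_f_coeff_succ, lie_zsmul, hp.lie_e_coeff]
    push_cast
    module

theorem natDegree_le [IsAddTorsionFree A] (hp : IsSl2String e f n p) : p.natDegree ≤ n := by
  have h := hp.lie_f_coeff_succ p.natDegree
  rw [coeff_natDegree_succ_eq_zero, lie_zero, coeff_natDegree, eq_comm, smul_eq_zero] at h
  rcases h with h | h
  · omega
  · simp [leadingCoeff_eq_zero.mp h]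

theorem iterate_lie_f (hp : IsSl2String e f n p) (k m : ℕ) (h : m + k = n) :
    (fun x ↦ ⁅f, x⁆)^[k] (p.coeff n) = k ! • p.coeff m := by
  induction k generalizing m with
  | zero => simp [← h]
  | succ k ih =>
    rw [Function.iterate_succ_apply', ih (m + 1) (by omega), lie_nsmul, hp.lie_f_coeff_succ,
      Nat.factorial_succ, ← h]
    push_cast
    module

theorem iterate_lie_e (hp : IsSl2String e f n p) (c k : ℕ) :
    (fun x ↦ ⁅e, x⁆)^[k] (c • p.coeff 0) = (c * k !) • p.coeff k := by
  induction k with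
  | zero => simp
  | succ k ih =>
    rw [Function.iterate_succ_apply', ih, lie_nsmul, hp.lie_e_coeff, smul_smul, Nat.factorial_succ]
    congr 1
    ring

theorem smul_coeff_smul {M : Type*} [AddCommGroup M] [Module A M] (hp : IsSl2String e f n p)
    {w : M} (hw : e • w = 0) (k : ℕ) : e • p.coeff k • w = (k + 1) • p.coeff (k + 1) • w := by
  have h := congrArg (· • w) (hp.lie_e_coeff k)
  simpa only [Ring.lie_def, sub_smul, mul_smul, hw, smul_zero, sub_zero, smul_assoc] using h

end IsSl2String

end Sl2String

section Enveloping

attribute [local instance] LieRing.ofAssociativeRing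

variable {L : Type*} [LieRing L] [LieAlgebra ℂ L]

theorem ιU_zero : ιU (0 : L) = 0 := map_zero (UniversalEnvelopingAlgebra.ι ℂ)

theorem ιU_neg (x : L) : ιU (-x) = -ιU x := map_neg (UniversalEnvelopingAlgebra.ι ℂ) x

theorem ιU_add (x y : L) : ιU (x + y) = ιU x + ιU y := map_add (UniversalEnvelopingAlgebra.ι ℂ) x y

theorem ιU_smul (c : ℂ) (x : L) : ιU (c • x) = c • ιU x :=
  map_smul (UniversalEnvelopingAlgebra.ι ℂ) c x

theorem ιU_nsmul (n : ℕ) (x : L) : ιU (n • x) = n • ιU x :=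
  map_nsmul (UniversalEnvelopingAlgebra.ι ℂ) n x

theorem lie_ιU (x y : L) : ⁅ιU x, ιU y⁆ = ιU ⁅x, y⁆ :=
  (LieHom.map_lie (UniversalEnvelopingAlgebra.ι ℂ) x y).symm

theorem ιU_mul_ιU (x y : L) : ιU x * ιU y = ιU y * ιU x + ιU ⁅x, y⁆ := by
  rw [← lie_ιU, Ring.lie_def, add_sub_cancel]

instance : IsAddTorsionFree (UniversalEnvelopingAlgebra ℂ L) :=
  .of_isTorsionFree ℂ _

variable {M : Type*} [AddCommGroup M] [Module (UniversalEnvelopingAlgebra ℂ L) M]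

theorem ιU_smul_ιU_smul (x y : L) (m : M) : ιU x • ιU y • m = ιU y • ιU x • m + ιU ⁅x, y⁆ • m := by
  rw [← mul_smul, ιU_mul_ιU, add_smul, mul_smul]

theorem ιU_smul_smul_eq_zero {x : L} {m : M} (c : ℂ) (hx : ιU x • m = 0) : ιU (c • x) • m = 0 := by
  rw [ιU_smul, ← one_mul (ιU x), ← smul_mul_assoc, mul_smul, hx, smul_zero]

theorem ιU_lie_smul_eq_zero {x y : L} {m : M} (hx : ιU x • m = 0) (hy : ιU y • m = 0) :
    ιU ⁅x, y⁆ • m = 0 := by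
  have h := ιU_smul_ιU_smul x y m
  rwa [hx, hy, smul_zero, smul_zero, zero_add, eq_comm] at h

theorem ιU_smul_smul {S : Type*} [SMul S M] [SMulCommClass (UniversalEnvelopingAlgebra ℂ L) S M]
    (x : L) (s : S) (m : M) : ιU x • s • m = s • ιU x • m :=
  smul_comm _ _ _

theorem ιU_add_smul (x y : L) (m : M) : ιU (x + y) • m = ιU x • m + ιU y • m := by
  rw [ιU_add, add_smul]

variable (L M) in
include L in
theorem isAddTorsionFree_of_module_universalEnvelopingAlgebra : IsAddTorsionFree M :=
  letI := Module.compHom M (algebraMap ℂ (UniversalEnvelopingAlgebra ℂ L))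
  .of_isTorsionFree ℂ M

end Enveloping

namespace G2Gens

section Brackets

variable {L : Type*} [LieRing L] [LieAlgebra ℂ L] (g : G2Gens L)

theorem lie_E10_E01 : ⁅g.E10, g.E01⁆ = g.E11 := rfl

theorem lie_E31_E01 : ⁅g.E31, g.E01⁆ = g.E32 := rfl

theorem lie_E11_E10 : ⁅g.E11, g.E10⁆ = 2 • g.E21 := by
  rw [E21]
  module

theorem lie_E21_E10 : ⁅g.E21, g.E10⁆ = 3 • g.E31 := by
  rw [E31]
  module

theorem lie_E11_E01 : ⁅g.E11, g.E01⁆ = 0 := by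
  have h := g.serreE2
  rwa [← lie_skew g.E01 g.E10, lie_neg, neg_eq_zero, ← lie_skew, neg_eq_zero] at h

theorem lie_E21_E01 : ⁅g.E21, g.E01⁆ = 0 := by
  rw [E21, smul_lie, lie_lie, lie_E10_E01, lie_self, lie_E11_E01, lie_zero]
  module

theorem lie_E21_E11 : ⁅g.E21, g.E11⁆ = 3 • g.E32 := by
  rw [E11, leibniz_lie, lie_E21_E10, lie_E21_E01, nsmul_lie, lie_E31_E01, lie_zero, add_zero]

theorem lie_E31_E10 : ⁅g.E31, g.E10⁆ = 0 := by
  have h : (-6 : ℂ) • ⁅g.E31, g.E10⁆ = 0 := by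
    rw [← g.serreE1, lie_E10_E01, ← lie_skew g.E10 g.E11, lie_E11_E10, lie_neg, lie_nsmul,
      ← lie_skew g.E10 g.E21, lie_E21_E10, lie_neg, lie_nsmul, lie_neg, lie_nsmul,
      ← lie_skew g.E10 g.E31]
    module
  simpa using h

theorem lie_E31_E11 : ⁅g.E31, g.E11⁆ = 0 := by
  have h₁ : ⁅g.E31, g.E11⁆ = ⁅g.E10, g.E32⁆ := by
    conv_lhs => rw [E11, leibniz_lie, lie_E31_E10, zero_lie, zero_add, lie_E31_E01]
  have h₂ : ⁅g.E31, g.E11⁆ = -⁅g.E10, g.E32⁆ := by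
    conv_lhs =>
      rw [E31, smul_lie, lie_lie, ← lie_skew g.E10 g.E11, lie_E11_E10, lie_neg, lie_nsmul, lie_self,
        lie_E21_E11, lie_nsmul]
    module
  rw [← h₁] at h₂
  have : IsAddTorsionFree L := .of_isTorsionFree ℂ L
  exact self_eq_neg.mp h₂

theorem lie_E32_E10 : ⁅g.E32, g.E10⁆ = 0 := by
  rw [← lie_skew, ← lie_E31_E01, leibniz_lie, lie_E10_E01, lie_E31_E11, ← lie_skew g.E10,
    lie_E31_E10, neg_zero, zero_lie, zero_add, neg_zero]

theorem lie_E31_E21 : ⁅g.E31, g.E21⁆ = 0 := by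
  rw [E21, lie_smul, leibniz_lie, lie_E31_E11, lie_E31_E10, zero_lie, lie_zero, add_zero, smul_zero]

theorem lie_E32_E21 : ⁅g.E32, g.E21⁆ = 0 := by
  rw [E32, lie_lie, lie_E31_E21, ← lie_skew g.E01, lie_E21_E01, neg_zero, lie_zero, lie_zero,
    sub_zero]

theorem lie_H10_E11 : ⁅g.H10, g.E11⁆ = -g.E11 := by
  rw [E11, leibniz_lie, hH10E10, hH10E01, smul_lie, lie_smul]
  module

theorem lie_H01_E11 : ⁅g.H01, g.E11⁆ = g.E11 := by
  rw [E11, leibniz_lie, hH01E10, hH01E01, smul_lie, lie_smul]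
  module

theorem lie_H10_E21 : ⁅g.H10, g.E21⁆ = g.E21 := by
  rw [E21, lie_smul, leibniz_lie, hH10E10, lie_H10_E11, neg_lie, lie_smul]
  module

theorem lie_H01_E21 : ⁅g.H01, g.E21⁆ = 0 := by
  rw [E21, lie_smul, leibniz_lie, hH01E10, lie_H01_E11, lie_smul]
  module

theorem lie_H01_E31 : ⁅g.H01, g.E31⁆ = -g.E31 := by
  rw [E31, lie_smul, leibniz_lie, hH01E10, lie_H01_E21, zero_lie, lie_smul]
  module

theorem lie_E11_F10 : ⁅g.E11, g.F10⁆ = -(3 • g.E01) := by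
  rw [E11, lie_lie, hE01F10, hE10F10, ← lie_skew g.E01, hH10E01, lie_zero]
  module

theorem lie_E11_F01 : ⁅g.E11, g.F01⁆ = g.E10 := by
  rw [E11, lie_lie, hE01F01, hE10F01, ← lie_skew, hH01E10, lie_zero]
  module

theorem lie_E21_F10 : ⁅g.E21, g.F10⁆ = 2 • g.E11 := by
  rw [E21, smul_lie, lie_lie, hE10F10, lie_E11_F10, ← lie_skew, lie_H10_E11, lie_neg,
    lie_nsmul, lie_E10_E01]
  module

theorem lie_E21_F01 : ⁅g.E21, g.F01⁆ = 0 := by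
  rw [E21, smul_lie, lie_lie, hE10F01, lie_E11_F01, lie_self, lie_zero]
  module

theorem lie_E31_F10 : ⁅g.E31, g.F10⁆ = g.E21 := by
  rw [E31, smul_lie, lie_lie, hE10F10, lie_E21_F10, ← lie_skew, lie_H10_E21, lie_nsmul,
    ← lie_skew g.E10, lie_E11_E10]
  module

theorem lie_E31_F01 : ⁅g.E31, g.F01⁆ = 0 := by
  rw [E31, smul_lie, lie_lie, hE10F01, lie_E21_F01, lie_zero, lie_zero, sub_zero, smul_zero]

theorem lie_E32_F10 : ⁅g.E32, g.F10⁆ = 0 := by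
  rw [E32, lie_lie, hE01F10, lie_E31_F10, ← lie_skew g.E01, lie_E21_E01, lie_zero, neg_zero,
    sub_zero]

theorem lie_E32_F01 : ⁅g.E32, g.F01⁆ = g.E31 := by
  rw [E32, lie_lie, hE01F01, lie_E31_F01, ← lie_skew, lie_H01_E31, lie_zero, neg_neg, sub_zero]

theorem lie_E11_F11 : ⁅g.E11, g.F11⁆ = g.H11 := by
  rw [F11, leibniz_lie, lie_E11_F01, lie_E11_F10, hE10F10, lie_neg, lie_nsmul, ← lie_skew,
    hE01F01, H11]
  module

theorem lie_E21_F11 : ⁅g.E21, g.F11⁆ = -(2 • g.E10) := by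
  rw [F11, leibniz_lie, lie_E21_F01, lie_E21_F10, zero_lie, lie_nsmul, ← lie_skew, lie_E11_F01]
  module

theorem lie_E31_F11 : ⁅g.E31, g.F11⁆ = 0 := by
  rw [F11, leibniz_lie, lie_E31_F01, lie_E31_F10, zero_lie, ← lie_skew, lie_E21_F01, neg_zero,
    add_zero]

theorem lie_E32_F11 : ⁅g.E32, g.F11⁆ = g.E21 := by
  rw [F11, leibniz_lie, lie_E32_F01, lie_E32_F10, lie_E31_F10, lie_zero, add_zero]

theorem lie_E21_F21 : ⁅g.E21, g.F21⁆ = g.H21 := by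
  rw [F21, lie_smul, leibniz_lie, lie_E21_F10, lie_E21_F11, nsmul_lie, lie_neg, lie_nsmul,
    lie_E11_F11, ← lie_skew, hE10F10, H11, H21]
  module

theorem lie_E31_F21 : ⁅g.E31, g.F21⁆ = -g.E10 := by
  rw [F21, lie_smul, leibniz_lie, lie_E31_F10, lie_E31_F11, lie_E21_F11, lie_zero]
  module

theorem lie_E32_F21 : ⁅g.E32, g.F21⁆ = -g.E11 := by
  rw [F21, lie_smul, leibniz_lie, lie_E32_F10, lie_E32_F11, ← lie_skew g.F10, lie_E21_F10, zero_lie]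
  module

theorem lie_E31_F31 : ⁅g.E31, g.F31⁆ = g.H31 := by
  rw [F31, lie_smul, leibniz_lie, lie_E31_F10, lie_E31_F21, lie_neg, lie_skew, lie_E21_F21, hE10F10,
    H21, H31]
  module

theorem lie_E32_F31 : ⁅g.E32, g.F31⁆ = -g.E01 := by
  rw [F31, lie_smul, leibniz_lie, lie_E32_F10, lie_E32_F21, lie_neg, lie_skew, lie_E11_F10,
    zero_lie]
  module

theorem lie_E32_F32 : ⁅g.E32, g.F32⁆ = g.H32 := by
  rw [F32, leibniz_lie, lie_E32_F01, lie_E32_F31, lie_E31_F31, lie_neg, lie_skew, hE01F01, H31, H32]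
  module

/-- The Chevalley generators with the roles of `Eᵢ` and `Fᵢ` exchanged (and `Hᵢ` negated). -/
def opposite : G2Gens L where
  E10 := g.F10
  E01 := g.F01
  F10 := g.E10
  F01 := g.E01
  H10 := -g.H10
  H01 := -g.H01
  hH10H01 := by simp [g.hH10H01]
  hE10F10 := by rw [← lie_skew, hE10F10]
  hE01F01 := by rw [← lie_skew, hE01F01]
  hE10F01 := by rw [← lie_skew, hE01F10, neg_zero]
  hE01F10 := by rw [← lie_skew, hE10F01, neg_zero]
  hH10E10 := by rw [neg_lie, hH10F10]; module
  hH01E01 := by rw [neg_lie, hH01F01]; module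
  hH10E01 := by rw [neg_lie, hH10F01]; module
  hH01E10 := by rw [neg_lie, hH01F10]; module
  hH10F10 := by rw [neg_lie, hH10E10]; module
  hH01F01 := by rw [neg_lie, hH01E01]; module
  hH10F01 := by rw [neg_lie, hH10E01]; module
  hH01F10 := by rw [neg_lie, hH01E10]; module
  serreE1 := g.serreF1
  serreE2 := g.serreF2
  serreF1 := g.serreE1
  serreF2 := g.serreE2
  generates := by
    rw [eq_top_iff, ← g.generates, LieSubalgebra.lieSpan_le]
    have h (x : L) (hx : x ∈ ({g.F10, g.F01, g.E10, g.E01, -g.H10, -g.H01} : Set L)) :=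
      LieSubalgebra.subset_lieSpan (R := ℂ) hx
    have hH10 := neg_mem (h (-g.H10) (by simp))
    have hH01 := neg_mem (h (-g.H01) (by simp))
    rw [neg_neg] at hH10 hH01
    rintro x (rfl | rfl | rfl | rfl | rfl | rfl)
    exacts [h _ (by simp), h _ (by simp), h _ (by simp), h _ (by simp), hH10, hH01]

theorem opposite_E11 : g.opposite.E11 = -g.F11 := (lie_skew _ _).symm

theorem opposite_F11 : g.opposite.F11 = -g.E11 := (lie_skew _ _).symm

theorem opposite_E21 : g.opposite.E21 = g.F21 := by
  rw [E21, opposite_E11, neg_lie, lie_skew]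
  rfl

theorem opposite_F21 : g.opposite.F21 = g.E21 := by
  rw [F21, opposite_F11, lie_neg, lie_skew]
  rfl

theorem opposite_E31 : g.opposite.E31 = -g.F31 := by
  rw [E31, opposite_E21, ← lie_skew, smul_neg]
  rfl

theorem opposite_F31 : g.opposite.F31 = -g.E31 := by
  rw [F31, opposite_F21, ← lie_skew, smul_neg]
  rfl

theorem opposite_E32 : g.opposite.E32 = g.F32 := by
  rw [E32, opposite_E31, neg_lie, lie_skew]
  rfl

theorem opposite_H21 : g.opposite.H21 = -g.H21 := by
  rw [H21, H21, neg_add, ← smul_neg, ← smul_neg]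
  rfl

theorem lie_F21_F10 : ⁅g.F21, g.F10⁆ = -(3 • g.F31) := by
  have h := g.opposite.lie_E21_E10
  rwa [opposite_E21, opposite_E31, smul_neg] at h

theorem lie_F21_F01 : ⁅g.F21, g.F01⁆ = 0 := by
  rw [← opposite_E21]
  exact g.opposite.lie_E21_E01

theorem lie_F21_F11 : ⁅g.F21, g.F11⁆ = -(3 • g.F32) := by
  have h := g.opposite.lie_E21_E11
  rwa [opposite_E21, opposite_E11, opposite_E32, lie_neg, neg_eq_iff_eq_neg] at h

theorem lie_F21_F31 : ⁅g.F21, g.F31⁆ = 0 := by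
  rw [← neg_eq_zero, ← lie_neg, ← opposite_E21, ← opposite_E31, ← lie_skew, lie_E31_E21, neg_zero]

theorem lie_F21_F32 : ⁅g.F21, g.F32⁆ = 0 := by
  rw [← opposite_E21, ← opposite_E32, ← lie_skew, lie_E32_E21, neg_zero]

theorem lie_F31_F10 : ⁅g.F31, g.F10⁆ = 0 := by
  have h := g.opposite.lie_E31_E10
  rwa [opposite_E31, neg_lie, neg_eq_zero] at h

theorem lie_F31_F11 : ⁅g.F31, g.F11⁆ = 0 := by
  have h := g.opposite.lie_E31_E11
  rwa [opposite_E31, opposite_E11, neg_lie, lie_neg, neg_neg] at h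

theorem lie_F32_F10 : ⁅g.F32, g.F10⁆ = 0 := by
  rw [← opposite_E32]
  exact g.opposite.lie_E32_E10

theorem lie_E10_F21 : ⁅g.E10, g.F21⁆ = 2 • g.F11 := by
  have h := g.opposite.lie_E21_F10
  rw [opposite_E21, opposite_E11, smul_neg, ← lie_skew, neg_inj] at h
  exact h

theorem lie_E01_F21 : ⁅g.E01, g.F21⁆ = 0 := by
  rw [← lie_skew, ← opposite_E21]
  exact neg_eq_zero.mpr g.opposite.lie_E21_F01

theorem lie_E10_F31 : ⁅g.E10, g.F31⁆ = g.F21 := by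
  have h := g.opposite.lie_E31_F10
  rwa [opposite_E31, opposite_E21, neg_lie, lie_skew] at h

theorem lie_E11_F21 : ⁅g.E11, g.F21⁆ = -(2 • g.F10) := by
  have h := g.opposite.lie_E21_F11
  rwa [opposite_E21, opposite_F11, lie_neg, lie_skew] at h

theorem lie_E21_F31 : ⁅g.E21, g.F31⁆ = -g.F10 := by
  have h := g.opposite.lie_E31_F21
  rwa [opposite_E31, opposite_F21, neg_lie, lie_skew] at h

theorem lie_E21_F32 : ⁅g.E21, g.F32⁆ = -g.F11 := by
  have h := g.opposite.lie_E32_F21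
  rw [opposite_E32, opposite_F21, opposite_E11, ← lie_skew, neg_neg] at h
  exact neg_eq_iff_eq_neg.mp h

theorem lie_E31_F32 : ⁅g.E31, g.F32⁆ = -g.F01 := by
  have h := g.opposite.lie_E32_F31
  rwa [opposite_E32, opposite_F31, lie_neg, lie_skew] at h

theorem lie_H21_E21 : ⁅g.H21, g.E21⁆ = 2 • g.E21 := by
  rw [H21, add_lie, smul_lie, smul_lie, lie_H10_E21, lie_H01_E21]
  module

theorem lie_H21_F21 : ⁅g.H21, g.F21⁆ = -(2 • g.F21) := by
  have h := g.opposite.lie_H21_E21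
  rwa [opposite_H21, opposite_E21, neg_lie, neg_eq_iff_eq_neg] at h

theorem lie_H01_F21 : ⁅g.H01, g.F21⁆ = 0 := by
  rw [← opposite_E21]
  exact neg_eq_zero.mp ((neg_lie _ _).symm.trans g.opposite.lie_H01_E21)

theorem lie_H31_F10 : ⁅g.H31, g.F10⁆ = -g.F10 := by
  rw [H31, add_lie, hH10F10, hH01F10]
  module

theorem lie_H31_F01 : ⁅g.H31, g.F01⁆ = g.F01 := by
  rw [H31, add_lie, hH10F01, hH01F01]
  module

theorem lie_H32_F10 : ⁅g.H32, g.F10⁆ = 0 := by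
  rw [H32, add_lie, smul_lie, hH10F10, hH01F10]
  module

end Brackets

section Strings

open Polynomial
open scoped Nat

attribute [local instance] LieRing.ofAssociativeRing

variable {L : Type*} [LieRing L] [LieAlgebra ℂ L] (g : G2Gens L)

/-- The string through `a = E₂₁`. -/
noncomputable def aString : (UniversalEnvelopingAlgebra ℂ L)[X] :=
  monomial 2 (ιU g.E21) - monomial 1 (ιU g.H21) - monomial 0 (ιU g.F21)

/-- The string through `E₃₁`. -/
noncomputable def e31String : (UniversalEnvelopingAlgebra ℂ L)[X] :=
  monomial 3 (ιU g.E31) + monomial 2 (ιU g.E10) - monomial 1 (ιU g.F11) + monomial 0 (ιU g.F32)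

/-- The string through `E₃₂`. -/
noncomputable def e32String : (UniversalEnvelopingAlgebra ℂ L)[X] :=
  monomial 3 (ιU g.E32) + monomial 2 (ιU g.E11) + monomial 1 (ιU g.F10) - monomial 0 (ιU g.F31)

theorem isSl2String_aString : IsSl2String (ιU g.E21) (ιU g.F21) 2 g.aString where
  lie_e := by
    have hEH : ⁅g.E21, g.H21⁆ = -(2 • g.E21) := by rw [← lie_skew, lie_H21_E21]
    simp only [aString, lie_sub, lie_C_monomial, lie_ιU, lie_self, lie_E21_F21, hEH,
      ιU_neg, ιU_nsmul, derivative_sub, derivative_monomial, ← nsmul_eq_mul', map_neg, map_nsmul,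
      map_zero]
    module
  lie_f := by
    have hFE : ⁅g.F21, g.E21⁆ = -g.H21 := by rw [← lie_skew, lie_E21_F21]
    have hFH : ⁅g.F21, g.H21⁆ = 2 • g.F21 := by rw [← lie_skew, lie_H21_F21, neg_neg]
    simp only [aString, lie_sub, lie_C_monomial, lie_ιU, lie_self, hFE, hFH, ιU_neg,
      ιU_nsmul, derivative_sub, derivative_monomial, ← nsmul_eq_mul', map_neg, map_nsmul, map_zero,
      mul_sub, mul_smul_comm, X_mul_monomial, X_pow_mul_monomial]
    module

theorem isSl2String_e31String : IsSl2String (ιU g.E21) (ιU g.F21) 3 g.e31String where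
  lie_e := by
    have hEE : ⁅g.E21, g.E31⁆ = 0 := by rw [← lie_skew, lie_E31_E21, neg_zero]
    simp only [e31String, lie_sub, lie_add, lie_C_monomial, lie_ιU, hEE, lie_E21_E10, lie_E21_F11,
      lie_E21_F32, ιU_zero, ιU_neg, ιU_nsmul, derivative_sub, derivative_add, derivative_monomial,
      ← nsmul_eq_mul', map_neg, map_nsmul, map_zero]
    module
  lie_f := by
    have hFE : ⁅g.F21, g.E31⁆ = g.E10 := by rw [← lie_skew, lie_E31_F21, neg_neg]
    have hFE' : ⁅g.F21, g.E10⁆ = -(2 • g.F11) := by rw [← lie_skew, lie_E10_F21]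
    simp only [e31String, lie_sub, lie_add, lie_C_monomial, lie_ιU, hFE, hFE', lie_F21_F11,
      lie_F21_F32, ιU_zero, ιU_neg, ιU_nsmul, derivative_sub, derivative_add, derivative_monomial,
      ← nsmul_eq_mul', map_neg, map_nsmul, map_zero, mul_sub, mul_add, mul_smul_comm,
      X_mul_monomial, X_pow_mul_monomial]
    module

theorem isSl2String_e32String : IsSl2String (ιU g.E21) (ιU g.F21) 3 g.e32String where
  lie_e := by
    have hEE : ⁅g.E21, g.E32⁆ = 0 := by rw [← lie_skew, lie_E32_E21, neg_zero]
    simp only [e32String, lie_sub, lie_add, lie_C_monomial, lie_ιU, hEE, lie_E21_E11, lie_E21_F10,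
      lie_E21_F31, ιU_zero, ιU_neg, ιU_nsmul, derivative_sub, derivative_add, derivative_monomial,
      ← nsmul_eq_mul', map_neg, map_nsmul, map_zero]
    module
  lie_f := by
    have hFE : ⁅g.F21, g.E32⁆ = g.E11 := by rw [← lie_skew, lie_E32_F21, neg_neg]
    have hFE' : ⁅g.F21, g.E11⁆ = 2 • g.F10 := by rw [← lie_skew, lie_E11_F21, neg_neg]
    simp only [e32String, lie_sub, lie_add, lie_C_monomial, lie_ιU, hFE, hFE', lie_F21_F10,
      lie_F21_F31, ιU_zero, ιU_neg, ιU_nsmul, derivative_sub, derivative_add, derivative_monomial,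
      ← nsmul_eq_mul', map_neg, map_nsmul, map_zero, mul_sub, mul_add, mul_smul_comm,
      X_mul_monomial, X_pow_mul_monomial]
    module

/-- The string through `b = E₃₁E₁₁ − E₃₂E₁₀`. -/
noncomputable def bString : (UniversalEnvelopingAlgebra ℂ L)[X] :=
  derivative g.e31String * g.e32String - g.e31String * derivative g.e32String

/-- The string through `c`. -/
noncomputable def cString : (UniversalEnvelopingAlgebra ℂ L)[X] :=
  g.e31String * g.e31String * C (ιU g.E01) - g.e32String * g.e31String * C (ιU g.H01)
    - g.e32String * g.e32String * C (ιU g.F01)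

theorem isSl2String_bString : IsSl2String (ιU g.E21) (ιU g.F21) 4 g.bString :=
  g.isSl2String_e31String.wronskian g.isSl2String_e32String

theorem isSl2String_cString : IsSl2String (ιU g.E21) (ιU g.F21) 6 g.cString := by
  have hX := g.isSl2String_e31String
  have hY := g.isSl2String_e32String
  have hE01 : IsSl2String (ιU g.E21) (ιU g.F21) 0 (C (ιU g.E01)) := by
    apply IsSl2String.const <;> rw [lie_ιU, ← ιU_zero]
    · rw [lie_E21_E01]
    · rw [← lie_skew, lie_E01_F21, neg_zero]
  have hH01 : IsSl2String (ιU g.E21) (ιU g.F21) 0 (C (ιU g.H01)) := by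
    apply IsSl2String.const <;> rw [lie_ιU, ← ιU_zero, ← lie_skew]
    · rw [lie_H01_E21, neg_zero]
    · rw [lie_H01_F21, neg_zero]
  have hF01 : IsSl2String (ιU g.E21) (ιU g.F21) 0 (C (ιU g.F01)) := by
    apply IsSl2String.const <;> rw [lie_ιU, ← ιU_zero]
    · rw [lie_E21_F01]
    · rw [lie_F21_F01]
  exact (((hX.mul hX).mul hE01).sub ((hY.mul hX).mul hH01)).sub ((hY.mul hY).mul hF01)

/-- Three times the string through `u`. -/
noncomputable def uString : (UniversalEnvelopingAlgebra ℂ L)[X] :=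
  g.aString * g.aString - 3 • g.bString

/-- Nine times the string through `v`. -/
noncomputable def vString : (UniversalEnvelopingAlgebra ℂ L)[X] :=
  2 • (g.aString * g.aString * g.aString) - 9 • (g.aString * g.bString) - 27 • g.cString

theorem isSl2String_uString : IsSl2String (ιU g.E21) (ιU g.F21) 4 g.uString :=
  (g.isSl2String_aString.mul g.isSl2String_aString).sub (g.isSl2String_bString.smul 3)

theorem isSl2String_vString : IsSl2String (ιU g.E21) (ιU g.F21) 6 g.vString :=
  have ha := g.isSl2String_aString
  ((((ha.mul ha).mul ha).smul 2).sub ((ha.mul g.isSl2String_bString).smul 9)).sub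
    (g.isSl2String_cString.smul 27)

theorem coeff_aString_zero : g.aString.coeff 0 = -ιU g.F21 := by
  simp [aString, coeff_monomial]

theorem coeff_aString_one : g.aString.coeff 1 = -ιU g.H21 := by
  simp [aString, coeff_monomial]

theorem coeff_aString_two : g.aString.coeff 2 = ιU g.E21 := by
  simp [aString, coeff_monomial]

theorem coeff_aString_mul_aString_two :
    (g.aString * g.aString).coeff 2 =
      ιU g.H21 * ιU g.H21 - ιU g.F21 * ιU g.E21 - ιU g.E21 * ιU g.F21 := by
  simp only [coeff_mul, Finset.Nat.sum_antidiagonal_eq_sum_range_succ_mk, Finset.sum_range_succ,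
    Finset.sum_range_zero, Nat.reduceSub, coeff_aString_zero, coeff_aString_one, coeff_aString_two]
  noncomm_ring

theorem coeff_aString_mul_aString_three :
    (g.aString * g.aString).coeff 3 = -(ιU g.H21 * ιU g.E21 + ιU g.E21 * ιU g.H21) := by
  have ha : g.aString.coeff 3 = 0 :=
    coeff_eq_zero_of_natDegree_lt (g.isSl2String_aString.natDegree_le.trans_lt (by decide))
  simp only [coeff_mul, Finset.Nat.sum_antidiagonal_eq_sum_range_succ_mk, Finset.sum_range_succ,
    Finset.sum_range_zero, Nat.reduceSub, coeff_aString_zero, coeff_aString_one, coeff_aString_two,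
    ha]
  noncomm_ring

theorem coeff_e31String_zero : g.e31String.coeff 0 = ιU g.F32 := by
  simp [e31String, coeff_monomial]

theorem coeff_e31String_one : g.e31String.coeff 1 = -ιU g.F11 := by
  simp [e31String, coeff_monomial]

theorem coeff_e31String_two : g.e31String.coeff 2 = ιU g.E10 := by
  simp [e31String, coeff_monomial]

theorem coeff_e31String_three : g.e31String.coeff 3 = ιU g.E31 := by
  simp [e31String, coeff_monomial]

theorem coeff_e31String_of_lt {k : ℕ} (hk : 3 < k) : g.e31String.coeff k = 0 :=
  coeff_eq_zero_of_natDegree_lt (g.isSl2String_e31String.natDegree_le.trans_lt hk)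

theorem coeff_e32String_zero : g.e32String.coeff 0 = -ιU g.F31 := by
  simp [e32String, coeff_monomial]

theorem coeff_e32String_one : g.e32String.coeff 1 = ιU g.F10 := by
  simp [e32String, coeff_monomial]

theorem coeff_e32String_two : g.e32String.coeff 2 = ιU g.E11 := by
  simp [e32String, coeff_monomial]

theorem coeff_e32String_three : g.e32String.coeff 3 = ιU g.E32 := by
  simp [e32String, coeff_monomial]

theorem coeff_e32String_of_lt {k : ℕ} (hk : 3 < k) : g.e32String.coeff k = 0 :=
  coeff_eq_zero_of_natDegree_lt (g.isSl2String_e32String.natDegree_le.trans_lt hk)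

theorem coeff_bString_zero :
    g.bString.coeff 0 = ιU g.F11 * ιU g.F31 - ιU g.F32 * ιU g.F10 := by
  simp only [bString, coeff_sub, coeff_mul, Finset.Nat.sum_antidiagonal_eq_sum_range_succ_mk,
    Finset.sum_range_succ, Finset.sum_range_zero, Nat.reduceSub, Nat.reduceAdd, coeff_derivative,
    coeff_e31String_zero, coeff_e31String_one, coeff_e32String_zero, coeff_e32String_one]
  push_cast
  noncomm_ring

theorem coeff_bString_one :
    g.bString.coeff 1 = -(2 • (ιU g.E10 * ιU g.F31 + ιU g.F32 * ιU g.E11)) := by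
  simp only [bString, coeff_sub, coeff_mul, Finset.Nat.sum_antidiagonal_eq_sum_range_succ_mk,
    Finset.sum_range_succ, Finset.sum_range_zero, Nat.reduceSub, Nat.reduceAdd, coeff_derivative,
    coeff_e31String_zero, coeff_e31String_one, coeff_e31String_two, coeff_e32String_zero,
    coeff_e32String_one, coeff_e32String_two]
  push_cast
  noncomm_ring

theorem coeff_bString_two :
    g.bString.coeff 2 = ιU g.E10 * ιU g.F10 + ιU g.F11 * ιU g.E11
      - 3 • (ιU g.E31 * ιU g.F31 + ιU g.F32 * ιU g.E32) := by
  simp only [bString, coeff_sub, coeff_mul, Finset.Nat.sum_antidiagonal_eq_sum_range_succ_mk,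
    Finset.sum_range_succ, Finset.sum_range_zero, Nat.reduceSub, Nat.reduceAdd, coeff_derivative,
    coeff_e31String_zero, coeff_e31String_one, coeff_e31String_two, coeff_e31String_three,
    coeff_e32String_zero, coeff_e32String_one, coeff_e32String_two, coeff_e32String_three]
  push_cast
  noncomm_ring

theorem coeff_bString_three :
    g.bString.coeff 3 = 2 • (ιU g.E31 * ιU g.F10 + ιU g.F11 * ιU g.E32) := by
  have hX : g.e31String.coeff 4 = 0 := g.coeff_e31String_of_lt (by decide)
  have hY : g.e32String.coeff 4 = 0 := g.coeff_e32String_of_lt (by decide)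
  simp only [bString, coeff_sub, coeff_mul, Finset.Nat.sum_antidiagonal_eq_sum_range_succ_mk,
    Finset.sum_range_succ, Finset.sum_range_zero, Nat.reduceSub, Nat.reduceAdd, coeff_derivative,
    coeff_e31String_zero, coeff_e31String_one, coeff_e31String_two, coeff_e31String_three,
    coeff_e32String_zero, coeff_e32String_one, coeff_e32String_two, coeff_e32String_three, hX, hY]
  push_cast
  noncomm_ring

theorem coeff_bString_four :
    g.bString.coeff 4 = g.bU := by
  have h : ιU g.E10 * ιU g.E32 = ιU g.E32 * ιU g.E10 := by
    rw [← sub_eq_zero, ← Ring.lie_def, lie_ιU, ← lie_skew, lie_E32_E10, neg_zero, ιU_zero]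
  have hX : g.e31String.coeff 4 = 0 := g.coeff_e31String_of_lt (by decide)
  have hY : g.e32String.coeff 4 = 0 := g.coeff_e32String_of_lt (by decide)
  have hX' : g.e31String.coeff 5 = 0 := g.coeff_e31String_of_lt (by decide)
  have hY' : g.e32String.coeff 5 = 0 := g.coeff_e32String_of_lt (by decide)
  simp only [bString, coeff_sub, coeff_mul, Finset.Nat.sum_antidiagonal_eq_sum_range_succ_mk,
    Finset.sum_range_succ, Finset.sum_range_zero, Nat.reduceSub, Nat.reduceAdd, coeff_derivative,
    coeff_e31String_zero, coeff_e31String_one, coeff_e31String_two, coeff_e31String_three,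
    coeff_e32String_zero, coeff_e32String_one, coeff_e32String_two, coeff_e32String_three, hX, hY,
    hX', hY']
  push_cast
  rw [bU, ← h]
  noncomm_ring

theorem coeff_cString_six : g.cString.coeff 6 = g.cU := by
  have hX := g.isSl2String_e31String.natDegree_le
  have hY := g.isSl2String_e32String.natDegree_le
  rw [cString, coeff_sub, coeff_sub, coeff_mul_C, coeff_mul_C, coeff_mul_C,
    coeff_mul_add_eq_of_natDegree_le (df := 3) (dg := 3) hX hX,
    coeff_mul_add_eq_of_natDegree_le (df := 3) (dg := 3) hY hX,
    coeff_mul_add_eq_of_natDegree_le (df := 3) (dg := 3) hY hY, coeff_e31String_three,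
    coeff_e32String_three, cU]

theorem coeff_cString_one :
    g.cString.coeff 1 = 2 • (ιU g.F31 * ιU g.F10 * ιU g.F01)
      - (ιU g.F11 * ιU g.F31 + ιU g.F32 * ιU g.F10) * ιU g.H01
      - (ιU g.F11 * ιU g.F32 + ιU g.F32 * ιU g.F11) * ιU g.E01 := by
  have h₁ : ιU g.F31 * ιU g.F11 = ιU g.F11 * ιU g.F31 := by
    rw [← sub_eq_zero, ← Ring.lie_def, lie_ιU, lie_F31_F11, ιU_zero]
  have h₂ : ιU g.F10 * ιU g.F32 = ιU g.F32 * ιU g.F10 := by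
    rw [← sub_eq_zero, ← neg_eq_zero, neg_sub, ← Ring.lie_def, lie_ιU, lie_F32_F10, ιU_zero]
  have h₃ : ιU g.F10 * ιU g.F31 = ιU g.F31 * ιU g.F10 := by
    rw [← sub_eq_zero, ← neg_eq_zero, neg_sub, ← Ring.lie_def, lie_ιU, lie_F31_F10, ιU_zero]
  rw [cString, coeff_sub, coeff_sub, coeff_mul_C, coeff_mul_C, coeff_mul_C]
  simp only [mul_coeff_one, coeff_e31String_zero, coeff_e31String_one, coeff_e32String_zero,
    coeff_e32String_one, mul_neg, neg_mul, h₁, h₂, h₃]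
  noncomm_ring

theorem coeff_uString_four : g.uString.coeff 4 = (3 : ℂ) • g.uU := by
  have ha := g.isSl2String_aString.natDegree_le
  rw [uString, coeff_sub, coeff_smul, coeff_mul_add_eq_of_natDegree_le (df := 2) (dg := 2) ha ha,
    coeff_aString_two, coeff_bString_four, uU, aU]
  module

theorem coeff_vString_six : g.vString.coeff 6 = (9 : ℂ) • g.vU := by
  have ha := g.isSl2String_aString
  rw [vString, coeff_sub, coeff_sub, coeff_smul, coeff_smul, coeff_smul,
    coeff_mul_add_eq_of_natDegree_le (df := 4) (dg := 2) (ha.mul ha).natDegree_le ha.natDegree_le,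
    coeff_mul_add_eq_of_natDegree_le (df := 2) (dg := 2) ha.natDegree_le ha.natDegree_le,
    coeff_mul_add_eq_of_natDegree_le (df := 2) (dg := 4) ha.natDegree_le
      g.isSl2String_bString.natDegree_le,
    coeff_aString_two, coeff_bString_four, coeff_cString_six, vU, aU]
  module

theorem adU_iterate_uU_mul_vU :
    (adU g.E21)^[5] ((adU g.F21)^[10] (g.uU * g.vU)) =
      ((5! * 10! : ℂ) / 27) • (g.uString * g.vString).coeff 5 := by
  have hu := g.isSl2String_uString
  have hv := g.isSl2String_vString
  have h : IsSl2String (ιU g.E21) (ιU g.F21) 10 ((27⁻¹ : ℂ) • (g.uString * g.vString)) :=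
    (hu.mul hv).smul _
  have htop : g.uU * g.vU = ((27⁻¹ : ℂ) • (g.uString * g.vString)).coeff 10 := by
    rw [coeff_smul, coeff_mul_add_eq_of_natDegree_le (df := 4) (dg := 6) hu.natDegree_le
      hv.natDegree_le, coeff_uString_four, coeff_vString_six, smul_mul_smul_comm, smul_smul]
    norm_num
  rw [htop]
  refine (congrArg _ (h.iterate_lie_f 10 0 rfl)).trans ((h.iterate_lie_e _ 5).trans ?_)
  rw [coeff_smul, ← Nat.cast_smul_eq_nsmul ℂ, smul_smul]
  congr 1
  push_cast
  ring

end Strings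

section HighestWeight

open Polynomial

variable {L : Type*} [LieRing L] [LieAlgebra ℂ L]
  {M : Type*} [AddCommGroup M] [Module (UniversalEnvelopingAlgebra ℂ L) M]

variable (g : G2Gens L)

theorem coeff_bString_zero_smul (m : M) :
    g.bString.coeff 0 • m = ιU g.F11 • ιU g.F31 • m - ιU g.F32 • ιU g.F10 • m := by
  rw [coeff_bString_zero, sub_smul, mul_smul, mul_smul]

theorem coeff_vString_smul (j : ℕ) (m : M) :
    g.vString.coeff j • m = 2 • (g.aString * g.aString * g.aString).coeff j • m
      - 9 • (g.aString * g.bString).coeff j • m - 27 • g.cString.coeff j • m := by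
  rw [vString, coeff_sub, coeff_sub, coeff_smul, coeff_smul, coeff_smul, sub_smul, sub_smul,
    smul_assoc, smul_assoc, smul_assoc]

theorem coeff_uString_four_smul (m : M) :
    g.uString.coeff 4 • m = ιU g.E21 • ιU g.E21 • m - 3 • g.bU • m := by
  have h : (3 : ℂ) • g.uU = g.aU * g.aU - 3 • g.bU := by rw [uU]; module
  rw [coeff_uString_four, h, sub_smul, mul_smul, smul_assoc, aU]

/-- The scalar by which the coefficient `3` of `vString`, which has weight zero, acts on a highest
weight vector of weight `(k, l)`. -/
def vEigenvalue {R : Type*} [CommRing R] (k l : R) : R :=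
  -((2 * k + 3 * l) * (2 * k + 3 * l - 2) * (2 * (2 * k + 3 * l) + 7) + 27 * l * (l + 2))

/-- The element `q(H)` of `U(𝔤)`. -/
noncomputable def qU : UniversalEnvelopingAlgebra ℂ L :=
  ((2 : ℂ) / 27) • (ιU g.H21 * (ιU g.H21 - 1) * (ιU g.H21 - 2) * (ιU g.H21 - 3) * (ιU g.H21 - 4))
    + ((5 : ℂ) / 9) • (ιU g.H21 * (ιU g.H21 - 2) * (ιU g.H21 - 3) * (ιU g.H21 - 4))
    + (ιU g.H21 - 3) * (ιU g.H21 - 4) * (ιU g.H01 * (ιU g.H01 + 2))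
    + (2 : ℂ) • (ιU g.H21 * (ιU g.H21 - 4) * (ιU g.H11 - 1))
    + (2 : ℂ) • ((ιU g.H21 - 4) * (ιU g.H10 * (ιU g.H10 - 1)))
    - (6 : ℂ) • ((ιU g.H21 - 4) * (ιU g.H01 * (ιU g.H01 + 1)))
    + (6 : ℂ) • ((ιU g.H21 - 3) * (ιU g.H01 * (ιU g.H01 + 2)))

theorem nsmul_qU :
    27 • g.qU =
      2 • (ιU g.H21 * (ιU g.H21 - 1) * (ιU g.H21 - 2) * (ιU g.H21 - 3) * (ιU g.H21 - 4))
        + 15 • (ιU g.H21 * (ιU g.H21 - 2) * (ιU g.H21 - 3) * (ιU g.H21 - 4))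
        + 27 • ((ιU g.H21 - 3) * (ιU g.H21 - 4) * (ιU g.H01 * (ιU g.H01 + 2)))
        + 54 • (ιU g.H21 * (ιU g.H21 - 4) * (ιU g.H11 - 1))
        + 54 • ((ιU g.H21 - 4) * (ιU g.H10 * (ιU g.H10 - 1)))
        - 162 • ((ιU g.H21 - 4) * (ιU g.H01 * (ιU g.H01 + 1)))
        + 162 • ((ιU g.H21 - 3) * (ιU g.H01 * (ιU g.H01 + 2))) := by
  rw [qU]
  module

variable {R : Type*} [CommRing R] [Module R M]

/-- `w` is a highest weight vector on which `H₁₀` and `H₀₁` act by the scalars `k` and `l`. The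
scalars come from an arbitrary commutative ring `R`, so as to include the universal Verma module. -/
structure IsHighestWeightVector (k l : R) (w : M) : Prop where
  E10_smul : ιU g.E10 • w = 0
  E01_smul : ιU g.E01 • w = 0
  H10_smul : ιU g.H10 • w = k • w
  H01_smul : ιU g.H01 • w = l • w

namespace IsHighestWeightVector

variable {g} {k l : R} {w : M} (hw : g.IsHighestWeightVector k l w)
include hw

theorem E11_smul : ιU g.E11 • w = 0 := ιU_lie_smul_eq_zero hw.E10_smul hw.E01_smul

theorem E21_smul : ιU g.E21 • w = 0 :=
  ιU_smul_smul_eq_zero _ (ιU_lie_smul_eq_zero hw.E11_smul hw.E10_smul)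

theorem E31_smul : ιU g.E31 • w = 0 :=
  ιU_smul_smul_eq_zero _ (ιU_lie_smul_eq_zero hw.E21_smul hw.E10_smul)

theorem E32_smul : ιU g.E32 • w = 0 := ιU_lie_smul_eq_zero hw.E31_smul hw.E01_smul

theorem H11_smul : ιU g.H11 • w = (k + 3 * l) • w := by
  have h : g.H11 = g.H10 + 3 • g.H01 := by rw [H11]; module
  rw [h, ιU_add_smul, ιU_nsmul, smul_assoc, hw.H10_smul, hw.H01_smul]
  module

theorem H21_smul : ιU g.H21 • w = (2 * k + 3 * l) • w := by
  have h : g.H21 = 2 • g.H10 + 3 • g.H01 := by rw [H21]; module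
  rw [h, ιU_add_smul, ιU_nsmul, ιU_nsmul, smul_assoc, smul_assoc, hw.H10_smul, hw.H01_smul]
  module

theorem H31_smul : ιU g.H31 • w = (k + l) • w := by
  rw [H31, ιU_add_smul, hw.H10_smul, hw.H01_smul, add_smul]

theorem H32_smul : ιU g.H32 • w = (k + 2 * l) • w := by
  have h : g.H32 = g.H10 + 2 • g.H01 := by rw [H32]; module
  rw [h, ιU_add_smul, ιU_nsmul, smul_assoc, hw.H10_smul, hw.H01_smul]
  module

theorem coeff_bString_one_smul : g.bString.coeff 1 • w = -(2 • ιU g.F21 • w) := by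
  rw [coeff_bString_one, neg_smul, smul_assoc, add_smul, mul_smul, mul_smul, hw.E11_smul,
    ιU_smul_ιU_smul, lie_E10_F31, hw.E10_smul, smul_zero, smul_zero, zero_add, add_zero]

theorem E21_smul_coeff_vString_smul (j : ℕ) :
    ιU g.E21 • g.vString.coeff j • w = (j + 1) • g.vString.coeff (j + 1) • w :=
  g.isSl2String_vString.smul_coeff_smul hw.E21_smul j

theorem smul_coeff_vString_two_smul_eq_zero {x : L} (hx : ⁅x, g.E21⁆ = 0)
    (h : ιU g.E21 • ιU x • g.vString.coeff 1 • w = 0) : ιU x • g.vString.coeff 2 • w = 0 := by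
  have := isAddTorsionFree_of_module_universalEnvelopingAlgebra L M
  have hcomm := ιU_smul_ιU_smul x g.E21 (g.vString.coeff 1 • w)
  rw [h, hx, ιU_zero, zero_smul, add_zero, hw.E21_smul_coeff_vString_smul, smul_comm] at hcomm
  exact (smul_eq_zero.mp hcomm).resolve_left two_ne_zero

variable [SMulCommClass (UniversalEnvelopingAlgebra ℂ L) R M]

theorem H21_smul_coeff_smul {n : ℕ} {p : (UniversalEnvelopingAlgebra ℂ L)[X]}
    (hp : IsSl2String (ιU g.E21) (ιU g.F21) n p) (j : ℕ) :
    ιU g.H21 • p.coeff j • w = (2 * k + 3 * l + 2 * j - n) • p.coeff j • w := by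
  have h := congrArg (· • w) (hp.lie_lie_coeff j)
  rw [lie_ιU, lie_E21_F21] at h
  simp only [Ring.lie_def, sub_smul, mul_smul, hw.H21_smul, sub_eq_iff_eq_add, smul_assoc] at h
  rw [h, smul_comm (p.coeff j)]
  generalize p.coeff j • w = m
  module

theorem coeff_vString_one_smul :
    g.vString.coeff 1 • w =
      (-(6 * (2 * k + 3 * l + 1))) • ιU g.F21 • ιU g.F21 • w
        + (18 * (k + 3 * l - 2)) • ιU g.F11 • ιU g.F31 • w
        - (18 * (k - 2)) • ιU g.F32 • ιU g.F10 • w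
        - 54 • ιU g.F31 • ιU g.F10 • ιU g.F01 • w := by
  have haaa : (g.aString * g.aString * g.aString).coeff 1 • w =
      (-(3 * (2 * k + 3 * l - 2))) • ιU g.F21 • ιU g.F21 • w := by
    simp only [mul_coeff_one, mul_coeff_zero, coeff_aString_zero, coeff_aString_one, add_mul,
      add_smul, mul_smul, neg_smul, smul_neg, neg_neg, hw.H21_smul, ιU_smul_smul,
      ιU_smul_ιU_smul g.H21 g.F21, lie_H21_F21, ιU_neg, ιU_nsmul, smul_add, smul_assoc]
    generalize ιU g.F21 • ιU g.F21 • w = m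
    module
  have hab : (g.aString * g.bString).coeff 1 • w = 2 • ιU g.F21 • ιU g.F21 • w
      - (2 * k + 3 * l - 4) • (ιU g.F11 • ιU g.F31 • w - ιU g.F32 • ιU g.F10 • w) := by
    rw [mul_coeff_one, add_smul, mul_smul, mul_smul, hw.coeff_bString_one_smul, coeff_aString_zero,
      coeff_aString_one, neg_smul, neg_smul, hw.H21_smul_coeff_smul g.isSl2String_bString,
      coeff_bString_zero_smul, smul_neg, neg_neg, smul_comm, ← sub_eq_add_neg]
    norm_num
  have hc : g.cString.coeff 1 • w = 2 • ιU g.F31 • ιU g.F10 • ιU g.F01 • w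
      - l • (ιU g.F11 • ιU g.F31 • w + ιU g.F32 • ιU g.F10 • w) := by
    simp only [coeff_cString_one, sub_smul, add_smul, mul_smul, smul_assoc, hw.H01_smul,
      hw.E01_smul, ιU_smul_smul, smul_zero, sub_zero, smul_add]
  rw [coeff_vString_smul, haaa, hab, hc]
  generalize ιU g.F21 • ιU g.F21 • w = m₁, ιU g.F11 • ιU g.F31 • w = m₂,
    ιU g.F32 • ιU g.F10 • w = m₃, ιU g.F31 • ιU g.F10 • ιU g.F01 • w = m₄
  module

theorem ιU_smul_coeff_vString_one_smul (x : L) :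
    ιU x • g.vString.coeff 1 • w =
      (-(6 * (2 * k + 3 * l + 1))) • ιU x • ιU g.F21 • ιU g.F21 • w
        + (18 * (k + 3 * l - 2)) • ιU x • ιU g.F11 • ιU g.F31 • w
        - (18 * (k - 2)) • ιU x • ιU g.F32 • ιU g.F10 • w
        - 54 • ιU x • ιU g.F31 • ιU g.F10 • ιU g.F01 • w := by
  rw [hw.coeff_vString_one_smul, smul_sub, smul_sub, smul_add, smul_comm (ιU x) (_ : R),
    smul_comm (ιU x) (_ : R), smul_comm (ιU x) (_ : R), smul_comm (ιU x) 54]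

theorem E32_smul_coeff_vString_one_smul :
    ιU g.E32 • g.vString.coeff 1 • w = (-(6 * (k - 1) * (3 * k + 6 * l + 4))) • ιU g.F10 • w := by
  have h₁ : ιU g.E32 • ιU g.F21 • ιU g.F21 • w = 2 • ιU g.F10 • w := by
    simp [-nsmul_eq_mul, smul_assoc, ιU_smul_ιU_smul g.E32, ιU_smul_ιU_smul g.E11, lie_E32_F21,
      lie_E11_F21, ιU_neg, ιU_nsmul, hw.E32_smul, hw.E11_smul]
  have h₂ : ιU g.E32 • ιU g.F11 • ιU g.F31 • w = -(ιU g.F10 • w) := by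
    simp [ιU_smul_ιU_smul g.E32, ιU_smul_ιU_smul g.E21, lie_E32_F11, lie_E32_F31, lie_E21_F31,
      ιU_neg, hw.E32_smul, hw.E21_smul, hw.E01_smul]
  have h₃ : ιU g.E32 • ιU g.F32 • ιU g.F10 • w = (k + 2 * l) • ιU g.F10 • w := by
    simp [ιU_smul_ιU_smul g.E32, ιU_smul_ιU_smul g.H32, lie_E32_F10, lie_E32_F32, lie_H32_F10,
      ιU_zero, hw.E32_smul, hw.H32_smul, ιU_smul_smul]
  have h₄ : ιU g.E32 • ιU g.F31 • ιU g.F10 • ιU g.F01 • w = -(l • ιU g.F10 • w) := by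
    simp [ιU_smul_ιU_smul g.E32, ιU_smul_ιU_smul g.E01, lie_E32_F31, lie_E32_F10, lie_E32_F01,
      hE01F10, hE01F01, ιU_zero, ιU_neg, hw.E32_smul, hw.E31_smul, hw.E01_smul, hw.H01_smul,
      ιU_smul_smul]
  rw [hw.ιU_smul_coeff_vString_one_smul, h₁, h₂, h₃, h₄]
  generalize ιU g.F10 • w = m
  module

theorem E31_smul_coeff_vString_one_smul :
    ιU g.E31 • g.vString.coeff 1 • w =
      (12 * (2 * k + 3 * l + 1) + 18 * (k + l) * (k + 3 * l - 2)) • ιU g.F11 • w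
        + (18 * (k - 2)) • ιU g.F01 • ιU g.F10 • w
        - (54 * (k + l)) • ιU g.F10 • ιU g.F01 • w := by
  have h₁ : ιU g.E31 • ιU g.F21 • ιU g.F21 • w = -(2 • ιU g.F11 • w) := by
    simp [-nsmul_eq_mul, smul_assoc, ιU_smul_ιU_smul g.E31, ιU_smul_ιU_smul g.E10, lie_E31_F21,
      lie_E10_F21, ιU_neg, ιU_nsmul, hw.E31_smul, hw.E10_smul]
  have h₂ : ιU g.E31 • ιU g.F11 • ιU g.F31 • w = (k + l) • ιU g.F11 • w := by
    simp [ιU_smul_ιU_smul g.E31, lie_E31_F11, lie_E31_F31, ιU_zero, hw.E31_smul, hw.H31_smul,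
      ιU_smul_smul]
  have h₃ : ιU g.E31 • ιU g.F32 • ιU g.F10 • w = -(ιU g.F01 • ιU g.F10 • w) := by
    simp [ιU_smul_ιU_smul g.E31, lie_E31_F10, lie_E31_F32, ιU_neg, hw.E31_smul, hw.E21_smul]
  have h₄ : ιU g.E31 • ιU g.F31 • ιU g.F10 • ιU g.F01 • w =
      (k + l) • ιU g.F10 • ιU g.F01 • w := by
    simp [ιU_smul_ιU_smul g.E31, ιU_smul_ιU_smul g.E21, ιU_smul_ιU_smul g.H31, lie_E31_F31,
      lie_E31_F10, lie_E31_F01, lie_E21_F01, lie_H31_F10, lie_H31_F01, ιU_zero, ιU_neg, hw.E31_smul,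
      hw.E21_smul, hw.H31_smul, ιU_smul_smul]
  rw [hw.ιU_smul_coeff_vString_one_smul, h₁, h₂, h₃, h₄]
  generalize ιU g.F11 • w = m₁, ιU g.F01 • ιU g.F10 • w = m₂, ιU g.F10 • ιU g.F01 • w = m₃
  module

theorem E11_smul_E31_smul_coeff_vString_one_smul :
    ιU g.E11 • ιU g.E31 • g.vString.coeff 1 • w =
      ((12 * (2 * k + 3 * l + 1) + 18 * (k + l) * (k + 3 * l - 2)) * (k + 3 * l)
        + 18 * k * (k - 2) + 162 * l * (k + l)) • w := by
  have h₁ : ιU g.E11 • ιU g.F11 • w = (k + 3 * l) • w := by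
    rw [ιU_smul_ιU_smul, lie_E11_F11, hw.E11_smul, hw.H11_smul, smul_zero, zero_add]
  have h₂ : ιU g.E11 • ιU g.F01 • ιU g.F10 • w = k • w := by
    simp [-nsmul_eq_mul, smul_assoc, ιU_smul_ιU_smul g.E11, ιU_smul_ιU_smul g.E10, lie_E11_F01,
      lie_E11_F10, hE10F10, ιU_neg, ιU_nsmul, hw.E11_smul, hw.E10_smul, hw.E01_smul, hw.H10_smul]
  have h₃ : ιU g.E11 • ιU g.F10 • ιU g.F01 • w = -(3 • l • w) := by
    simp [-nsmul_eq_mul, smul_assoc, ιU_smul_ιU_smul g.E11, ιU_smul_ιU_smul g.E01, lie_E11_F01,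
      lie_E11_F10, hE01F01, ιU_neg, ιU_nsmul, hw.E11_smul, hw.E10_smul, hw.E01_smul, hw.H01_smul]
  rw [hw.E31_smul_coeff_vString_one_smul, smul_sub, smul_add, smul_comm (ιU g.E11) (_ : R),
    smul_comm (ιU g.E11) (_ : R), smul_comm (ιU g.E11) (_ : R), h₁, h₂, h₃]
  module

theorem E10_smul_E32_smul_coeff_vString_one_smul :
    ιU g.E10 • ιU g.E32 • g.vString.coeff 1 • w =
      (-(6 * k * (k - 1) * (3 * k + 6 * l + 4))) • w := by
  rw [hw.E32_smul_coeff_vString_one_smul, smul_comm (ιU g.E10) (_ : R), ιU_smul_ιU_smul, hE10F10,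
    hw.E10_smul, hw.H10_smul, smul_zero, zero_add]
  module

theorem E21_smul_E31_smul_coeff_vString_one_smul :
    ιU g.E21 • ιU g.E31 • g.vString.coeff 1 • w = 0 := by
  rw [hw.E31_smul_coeff_vString_one_smul]
  simp [smul_sub, smul_add, -nsmul_eq_mul, smul_assoc, ιU_smul_smul, ιU_smul_ιU_smul g.E21,
    ιU_smul_ιU_smul g.E11, lie_E21_F11, lie_E21_F01, lie_E21_F10, lie_E11_F01, ιU_zero, ιU_neg,
    ιU_nsmul, hw.E21_smul, hw.E11_smul, hw.E10_smul]

theorem E21_smul_E32_smul_coeff_vString_one_smul :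
    ιU g.E21 • ιU g.E32 • g.vString.coeff 1 • w = 0 := by
  rw [hw.E32_smul_coeff_vString_one_smul]
  simp [-nsmul_eq_mul, smul_assoc, ιU_smul_smul, ιU_smul_ιU_smul g.E21, lie_E21_F10, ιU_nsmul,
    hw.E21_smul, hw.E11_smul]

theorem E21_smul_E21_smul_coeff_vString_one_smul :
    ιU g.E21 • ιU g.E21 • g.vString.coeff 1 • w =
      (-(6 * ((2 * k + 3 * l) * (2 * k + 3 * l - 2) * (2 * (2 * k + 3 * l) + 7)
        + 27 * l * (l + 2)))) • w := by
  have h₁ : ιU g.E21 • ιU g.E21 • ιU g.F21 • ιU g.F21 • w =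
      (2 * (2 * k + 3 * l) * (2 * k + 3 * l - 1)) • w := by
    simp only [neg_smul, smul_assoc, smul_add, smul_neg, smul_zero, zero_add, ιU_smul_ιU_smul g.E21,
      ιU_smul_ιU_smul g.H21, lie_E21_F21, lie_H21_F21, ιU_neg, ιU_nsmul, hw.E21_smul, hw.H21_smul,
      ιU_smul_smul]
    module
  have h₂ : ιU g.E21 • ιU g.E21 • ιU g.F11 • ιU g.F31 • w = (-(2 * (k + 3 * l))) • w := by
    simp only [neg_smul, smul_assoc, smul_add, smul_neg, smul_zero, add_zero, zero_add,
      ιU_smul_ιU_smul g.E21, ιU_smul_ιU_smul g.E10, lie_E21_F11, lie_E21_F31, lie_E21_F10,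
      lie_E10_F31, hE10F10, lie_E21_F21, ιU_neg, ιU_nsmul, hw.E21_smul, hw.E10_smul, hw.E11_smul,
      hw.H10_smul, hw.H21_smul, ιU_smul_smul]
    module
  have h₃ : ιU g.E21 • ιU g.E21 • ιU g.F32 • ιU g.F10 • w = (2 * k) • w := by
    simp only [neg_smul, smul_assoc, smul_neg, smul_zero, add_zero, zero_add, ιU_smul_ιU_smul g.E21,
      ιU_smul_ιU_smul g.E10, lie_E21_F32, lie_E21_F11, lie_E21_F10, hE10F10, ιU_neg, ιU_nsmul,
      hw.E21_smul, hw.E10_smul, hw.E11_smul, hw.H10_smul]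
    module
  have h₄ : ιU g.E21 • ιU g.E21 • ιU g.F31 • ιU g.F10 • ιU g.F01 • w = (6 * l) • w := by
    simp only [neg_smul, zero_smul, smul_assoc, smul_neg, smul_zero, add_zero, zero_add,
      ιU_smul_ιU_smul g.E21, ιU_smul_ιU_smul g.E11, ιU_smul_ιU_smul g.E01, lie_E21_F31, lie_E21_F10,
      lie_E21_F01, lie_E11_F10, lie_E11_F01, hE01F01, ιU_zero, ιU_neg, ιU_nsmul, hw.E21_smul,
      hw.E10_smul, hw.E01_smul, hw.E11_smul, hw.H01_smul]
    module
  rw [hw.ιU_smul_coeff_vString_one_smul, smul_sub, smul_sub, smul_add,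
    smul_comm (ιU g.E21) (_ : R), smul_comm (ιU g.E21) (_ : R), smul_comm (ιU g.E21) (_ : R),
    smul_comm (ιU g.E21) 54, h₁, h₂, h₃, h₄]
  module

theorem coeff_vString_three_smul : g.vString.coeff 3 • w = vEigenvalue k l • w := by
  have := isAddTorsionFree_of_module_universalEnvelopingAlgebra L M
  have h := hw.E21_smul_E21_smul_coeff_vString_one_smul
  rw [hw.E21_smul_coeff_vString_smul, smul_comm (ιU g.E21) (1 + 1),
    hw.E21_smul_coeff_vString_smul, smul_smul] at h
  refine nsmul_right_injective (n := 6) (by decide) (h.trans ?_)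
  dsimp only [vEigenvalue]
  module

theorem coeff_vString_smul_of_three_lt {j : ℕ} (hj : 3 < j) : g.vString.coeff j • w = 0 := by
  have := isAddTorsionFree_of_module_universalEnvelopingAlgebra L M
  induction j, hj using Nat.le_induction with
  | base =>
    have h := hw.E21_smul_coeff_vString_smul 3
    rw [hw.coeff_vString_three_smul, smul_comm, hw.E21_smul, smul_zero, eq_comm] at h
    exact (smul_eq_zero.mp h).resolve_left (by decide)
  | succ j _ ih =>
    have h := hw.E21_smul_coeff_vString_smul j
    rw [ih, smul_zero, eq_comm] at h
    exact (smul_eq_zero.mp h).resolve_left j.succ_ne_zero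

theorem coeff_uString_two_smul :
    g.uString.coeff 2 • w = ((2 * k + 3 * l) * (2 * k + 3 * l + 2)) • w := by
  have haa : (g.aString * g.aString).coeff 2 • w =
      ((2 * k + 3 * l) * (2 * k + 3 * l - 1)) • w := by
    rw [coeff_aString_mul_aString_two, sub_smul, sub_smul, mul_smul, mul_smul, mul_smul,
      hw.E21_smul, hw.H21_smul, smul_comm, hw.H21_smul, ιU_smul_ιU_smul g.E21, lie_E21_F21,
      hw.E21_smul, hw.H21_smul, smul_zero, zero_add]
    module
  have hb : g.bString.coeff 2 • w = (-(2 * k + 3 * l)) • w := by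
    simp only [coeff_bString_two, sub_smul, add_smul, smul_assoc, mul_smul, hw.E11_smul,
      hw.E32_smul, ιU_smul_ιU_smul g.E10, ιU_smul_ιU_smul g.E31, hE10F10, lie_E31_F31, hw.E10_smul,
      hw.E31_smul, hw.H10_smul, hw.H31_smul, smul_zero, zero_add, add_zero]
    module
  rw [uString, coeff_sub, coeff_smul, sub_smul, smul_assoc, haa, hb]
  module

theorem coeff_uString_three_smul_coeff_vString_two_smul :
    g.uString.coeff 3 • g.vString.coeff 2 • w =
      (-(6 * (2 * k + 3 * l + 2) * vEigenvalue k l)) • w := by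
  have hE : ιU g.E21 • g.vString.coeff 2 • w = (3 * vEigenvalue k l) • w := by
    rw [hw.E21_smul_coeff_vString_smul, hw.coeff_vString_three_smul]
    module
  have hH := hw.H21_smul_coeff_smul g.isSl2String_vString 2
  have haa : (g.aString * g.aString).coeff 3 • g.vString.coeff 2 • w =
      (-(6 * (2 * k + 3 * l - 1) * vEigenvalue k l)) • w := by
    rw [coeff_aString_mul_aString_three, neg_smul, add_smul, mul_smul, mul_smul, hE, hH,
      smul_comm (ιU g.H21), hw.H21_smul, smul_comm (ιU g.E21), hE]
    push_cast
    module
  have hb : g.bString.coeff 3 • g.vString.coeff 2 • w = (6 * vEigenvalue k l) • w := by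
    rw [coeff_bString_three, smul_assoc, add_smul, mul_smul, mul_smul, ιU_smul_ιU_smul g.E31,
      lie_E31_F10, hE, hw.smul_coeff_vString_two_smul_eq_zero g.lie_E31_E21
      hw.E21_smul_E31_smul_coeff_vString_one_smul, hw.smul_coeff_vString_two_smul_eq_zero
      g.lie_E32_E21 hw.E21_smul_E32_smul_coeff_vString_one_smul, smul_zero, smul_zero, zero_add,
      add_zero]
    module
  rw [uString, coeff_sub, coeff_smul, sub_smul, smul_assoc, haa, hb]
  module

theorem bU_smul_coeff_vString_one_smul :
    g.bU • g.vString.coeff 1 • w =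
      ((12 * (2 * k + 3 * l + 1) + 18 * (k + l) * (k + 3 * l - 2)) * (k + 3 * l)
        + 18 * k * (k - 2) + 162 * l * (k + l)
        + 6 * k * (k - 1) * (3 * k + 6 * l + 4)) • w := by
  rw [bU, sub_smul, mul_smul, mul_smul, ιU_smul_ιU_smul g.E31, ιU_smul_ιU_smul g.E32, lie_E31_E11,
    lie_E32_E10, ιU_zero, zero_smul, add_zero, add_zero,
    hw.E11_smul_E31_smul_coeff_vString_one_smul, hw.E10_smul_E32_smul_coeff_vString_one_smul]
  module

theorem qU_smul :
    27 • g.qU • w =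
      (2 * (2 * k + 3 * l) * (2 * k + 3 * l - 1) * (2 * k + 3 * l - 2) * (2 * k + 3 * l - 3)
          * (2 * k + 3 * l - 4)
        + 15 * (2 * k + 3 * l) * (2 * k + 3 * l - 2) * (2 * k + 3 * l - 3) * (2 * k + 3 * l - 4)
        + 27 * (2 * k + 3 * l - 3) * (2 * k + 3 * l - 4) * l * (l + 2)
        + 54 * (2 * k + 3 * l) * (2 * k + 3 * l - 4) * (k + 3 * l - 1)
        + 54 * (2 * k + 3 * l - 4) * k * (k - 1)
        - 162 * (2 * k + 3 * l - 4) * l * (l + 1)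
        + 162 * (2 * k + 3 * l - 3) * l * (l + 2)) • w := by
  have hsub {x y : UniversalEnvelopingAlgebra ℂ L} {r s : R} (hx : x • w = r • w)
      (hy : y • w = s • w) : (x - y) • w = (r - s) • w := by rw [sub_smul, sub_smul, hx, hy]
  have hadd {x y : UniversalEnvelopingAlgebra ℂ L} {r s : R} (hx : x • w = r • w)
      (hy : y • w = s • w) : (x + y) • w = (r + s) • w := by rw [add_smul, add_smul, hx, hy]
  have hmul {x y : UniversalEnvelopingAlgebra ℂ L} {r s : R} (hx : x • w = r • w)
      (hy : y • w = s • w) : (x * y) • w = (r * s) • w := by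
    rw [mul_comm r, mul_smul, mul_smul, hy, smul_comm, hx]
  have hone : (1 : UniversalEnvelopingAlgebra ℂ L) • w = (1 : R) • w := by rw [one_smul, one_smul]
  have hlit (n : ℕ) [n.AtLeastTwo] : (ofNat(n) : UniversalEnvelopingAlgebra ℂ L) • w =
      (ofNat(n) : R) • w :=
    (ofNat_smul_eq_nsmul _ n w).trans (ofNat_smul_eq_nsmul _ n w).symm
  have h₂ := hsub hw.H21_smul (hlit 2)
  have h₃ := hsub hw.H21_smul (hlit 3)
  have h₄ := hsub hw.H21_smul (hlit 4)
  rw [← smul_assoc, nsmul_qU, add_smul, sub_smul, add_smul, add_smul, add_smul, add_smul]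
  simp only [smul_assoc]
  rw [hmul (hmul (hmul (hmul hw.H21_smul (hsub hw.H21_smul hone)) h₂) h₃) h₄,
    hmul (hmul (hmul hw.H21_smul h₂) h₃) h₄,
    hmul (hmul h₃ h₄) (hmul hw.H01_smul (hadd hw.H01_smul (hlit 2))),
    hmul (hmul hw.H21_smul h₄) (hsub hw.H11_smul hone),
    hmul h₄ (hmul hw.H10_smul (hsub hw.H10_smul hone)),
    hmul h₄ (hmul hw.H01_smul (hadd hw.H01_smul hone)),
    hmul h₃ (hmul hw.H01_smul (hadd hw.H01_smul (hlit 2)))]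
  module

theorem coeff_uString_mul_vString_five_smul :
    (g.uString * g.vString).coeff 5 • w = (-(27 • g.qU)) • w := by
  have hu : g.uString.coeff 5 = 0 :=
    coeff_eq_zero_of_natDegree_lt (g.isSl2String_uString.natDegree_le.trans_lt (by decide))
  have hu₄ : g.uString.coeff 4 • g.vString.coeff 1 • w = 6 • vEigenvalue k l • w
      - 3 • g.bU • g.vString.coeff 1 • w := by
    rw [coeff_uString_four_smul, hw.E21_smul_coeff_vString_smul, smul_comm (ιU g.E21) (1 + 1),
      hw.E21_smul_coeff_vString_smul, hw.coeff_vString_three_smul, smul_smul]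
    norm_num only
  rw [neg_smul, smul_assoc, hw.qU_smul, coeff_mul, Finset.Nat.sum_antidiagonal_eq_sum_range_succ_mk]
  simp only [Finset.sum_range_succ, Finset.sum_range_zero, Nat.reduceSub, add_smul, mul_smul, hu,
    zero_smul, hw.coeff_vString_smul_of_three_lt (Nat.lt_succ_self 3),
    hw.coeff_vString_smul_of_three_lt (j := 5) (by decide), smul_zero, zero_add,
    hw.coeff_vString_three_smul, hu₄, hw.coeff_uString_three_smul_coeff_vString_two_smul,
    hw.bU_smul_coeff_vString_one_smul]
  rw [smul_comm (g.uString.coeff 2), hw.coeff_uString_two_smul, vEigenvalue]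
  module

end IsHighestWeightVector

end HighestWeight

section UniversalVermaModule

open scoped IsMulCommutative

universe u

variable {L : Type u} [LieRing L] [LieAlgebra ℂ L] (g : G2Gens L)

/-- The left ideal `U(𝔤)𝔫₊`. The quotient by it is the universal Verma module. -/
def nPlusIdeal : Submodule (UniversalEnvelopingAlgebra ℂ L) (UniversalEnvelopingAlgebra ℂ L) :=
  Submodule.span _ {ιU g.E10, ιU g.E01}

theorem eqModN_iff_sub_mem {f h : UniversalEnvelopingAlgebra ℂ L} :
    g.EqModN f h ↔ f - h ∈ g.nPlusIdeal := by
  simp only [EqModN, nPlusIdeal, Submodule.mem_span_pair, smul_eq_mul, eq_comm]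

theorem ιU_E10_mem_nPlusIdeal : ιU g.E10 ∈ g.nPlusIdeal :=
  Submodule.subset_span (Set.mem_insert _ _)

theorem ιU_E01_mem_nPlusIdeal : ιU g.E01 ∈ g.nPlusIdeal :=
  Submodule.subset_span (Set.mem_insert_of_mem _ rfl)

theorem nPlusIdeal_le_comap_toSpanSingleton_ιU {x : L} {c d : ℂ} (h10 : ⁅x, g.E10⁆ = c • g.E10)
    (h01 : ⁅x, g.E01⁆ = d • g.E01) :
    g.nPlusIdeal ≤ g.nPlusIdeal.comap (LinearMap.toSpanSingleton _ _ (ιU x)) := by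
  have hmul {y : L} {c : ℂ} (hy : ιU y ∈ g.nPlusIdeal) (h : ⁅x, y⁆ = c • y) :
      ιU y * ιU x ∈ g.nPlusIdeal := by
    have hxy : ιU y * ιU x = (ιU x - algebraMap ℂ _ c) * ιU y := by
      rw [sub_mul, ιU_mul_ιU x y, h, ιU_smul, Algebra.smul_def, add_sub_cancel_right]
    rw [hxy]
    exact g.nPlusIdeal.smul_mem _ hy
  refine Submodule.span_le.mpr ?_
  rintro _ (rfl | rfl)
  · exact hmul g.ιU_E10_mem_nPlusIdeal h10
  · exact hmul g.ιU_E01_mem_nPlusIdeal h01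

/-- The endomorphism of the universal Verma module induced by right multiplication by `H₁₀`. -/
noncomputable def rightMulH10 :
    Module.End (UniversalEnvelopingAlgebra ℂ L) (UniversalEnvelopingAlgebra ℂ L ⧸ g.nPlusIdeal) :=
  g.nPlusIdeal.mapQ _ _ (g.nPlusIdeal_le_comap_toSpanSingleton_ιU g.hH10E10 g.hH10E01)

/-- The endomorphism of the universal Verma module induced by right multiplication by `H₀₁`. -/
noncomputable def rightMulH01 :
    Module.End (UniversalEnvelopingAlgebra ℂ L) (UniversalEnvelopingAlgebra ℂ L ⧸ g.nPlusIdeal) :=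
  g.nPlusIdeal.mapQ _ _ (g.nPlusIdeal_le_comap_toSpanSingleton_ιU g.hH01E10 g.hH01E01)

theorem commute_rightMulH10_rightMulH01 : Commute g.rightMulH10 g.rightMulH01 := by
  have h := ιU_mul_ιU g.H10 g.H01
  rw [hH10H01, ιU_zero, add_zero] at h
  refine LinearMap.ext fun m ↦ ?_
  obtain ⟨x, rfl⟩ := Submodule.Quotient.mk_surjective _ m
  change Submodule.Quotient.mk (x * ιU g.H01 * ιU g.H10) =
    Submodule.Quotient.mk (x * ιU g.H10 * ιU g.H01)
  rw [mul_assoc, mul_assoc, h]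

theorem eqModN_of_forall_isHighestWeightVector {f h : UniversalEnvelopingAlgebra ℂ L}
    (H : ∀ {M R : Type u} [AddCommGroup M] [Module (UniversalEnvelopingAlgebra ℂ L) M]
      [CommRing R] [Module R M] [SMulCommClass (UniversalEnvelopingAlgebra ℂ L) R M] {k l : R}
      {w : M}, g.IsHighestWeightVector k l w → f • w = h • w) :
    g.EqModN f h := by
  let U := UniversalEnvelopingAlgebra ℂ L
  let s : Set (Module.End U (U ⧸ g.nPlusIdeal)) := {g.rightMulH10, g.rightMulH01}
  have hcomm : ∀ x ∈ s, ∀ y ∈ s, x * y = y * x := by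
    rintro _ (rfl | rfl) _ (rfl | rfl)
    exacts [rfl, g.commute_rightMulH10_rightMulH01, g.commute_rightMulH10_rightMulH01.symm, rfl]
  have := Subring.isMulCommutative_closure hcomm
  let k : Subring.closure s := ⟨g.rightMulH10, Subring.subset_closure (Set.mem_insert _ _)⟩
  let l : Subring.closure s :=
    ⟨g.rightMulH01, Subring.subset_closure (Set.mem_insert_of_mem _ rfl)⟩
  let w : U ⧸ g.nPlusIdeal := Submodule.Quotient.mk 1
  have hmk (x : U) : x • w = Submodule.Quotient.mk x := by
    rw [← Submodule.Quotient.mk_smul, smul_eq_mul, mul_one]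
  have hw : g.IsHighestWeightVector k l w := by
    constructor
    · rw [hmk, Submodule.Quotient.mk_eq_zero]
      exact g.ιU_E10_mem_nPlusIdeal
    · rw [hmk, Submodule.Quotient.mk_eq_zero]
      exact g.ιU_E01_mem_nPlusIdeal
    · rw [hmk]
      exact congrArg Submodule.Quotient.mk (one_mul (ιU g.H10)).symm
    · rw [hmk]
      exact congrArg Submodule.Quotient.mk (one_mul (ιU g.H01)).symm
  rw [eqModN_iff_sub_mem, ← Submodule.Quotient.eq, ← hmk, ← hmk]
  exact H hw

end UniversalVermaModule

end G2Gens

/-- **Lemma 3.5, proved part (lem-third-case).**  With `u = (1/3)a² − b` and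
`v = (2/9)a³ − ab − 3c`, the polynomial `q(H)` of Lemma 3.5 arises, up to a nonzero rational
constant, from `u·v` (the image under Zhu's map of the singular vector of `N(−2/3, 0)` of
type `G₂⁽¹⁾`) modulo `U(𝔤)𝔫₊`. -/
theorem G2Gens.level_minus_two_thirds_polynomial
    {L : Type*} [LieRing L] [LieAlgebra ℂ L] (g : G2Gens L) :
    ∃ C : ℚ, C ≠ 0 ∧
      g.EqModN ((adU g.E21)^[5] ((adU g.F21)^[10] (g.uU * g.vU)))
        ((C : ℂ) •
          (((2 : ℂ) / 27) • (ιU g.H21 * (ιU g.H21 - 1) * (ιU g.H21 - 2)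
              * (ιU g.H21 - 3) * (ιU g.H21 - 4))
            + ((5 : ℂ) / 9) • (ιU g.H21 * (ιU g.H21 - 2) * (ιU g.H21 - 3) * (ιU g.H21 - 4))
            + (ιU g.H21 - 3) * (ιU g.H21 - 4) * (ιU g.H01 * (ιU g.H01 + 2))
            + (2 : ℂ) • (ιU g.H21 * (ιU g.H21 - 4) * (ιU g.H11 - 1))
            + (2 : ℂ) • ((ιU g.H21 - 4) * (ιU g.H10 * (ιU g.H10 - 1)))
            - (6 : ℂ) • ((ιU g.H21 - 4) * (ιU g.H01 * (ιU g.H01 + 1)))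
            + (6 : ℂ) • ((ιU g.H21 - 3) * (ιU g.H01 * (ιU g.H01 + 2))))) := by
  refine ⟨-(Nat.factorial 5 * Nat.factorial 10), by simp [Nat.factorial_ne_zero], ?_⟩
  refine g.eqModN_of_forall_isHighestWeightVector fun hw ↦ ?_
  change _ = (_ • g.qU) • _
  rw [adU_iterate_uU_mul_vU, Algebra.smul_def, mul_smul, hw.coeff_uString_mul_vString_five_smul,
    ← mul_smul, ← Algebra.smul_def]
  congr 1
  push_cast
  module
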